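/- The function g(θ) = exp(−1/(1+cos θ)²)·sin²(tan(θ/2)), extended by 0 at θ = π + 2kπ, is smooth (C^∞) on ℝ. -/

import Mathlib

open Real

open Classical in
noncomputable def g (θ : ℝ) : ℝ :=
  if ∃ k : ℤ, θ = π + 2 * π * k then 0
  else Real.exp (-(1 / (1 + Real.cos θ) ^ 2)) * Real.sin (Real.tan (θ / 2)) ^ 2

noncomputable def EE (θ : ℝ) : ℝ := expNegInvGlue (4 * cos (θ / 2) ^ 4)

noncomputable def HH (n : ℕ) (a : ℝ → ℝ) (c : ℝ) (θ : ℝ) : ℝ :=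
  EE θ * ((cos (θ / 2))⁻¹ ^ n * (a θ * sin (2 * tan (θ / 2) + c)))

lemma EE_smooth : ContDiff ℝ (⊤ : ℕ∞) EE := by
  unfold EE
  exact expNegInvGlue.contDiff.comp (by fun_prop)

lemma EE_zero {θ : ℝ} (h : cos (θ / 2) = 0) : EE θ = 0 := by
  simp [EE, h]

lemma EE_eq {θ : ℝ} (h : cos (θ / 2) ≠ 0) : EE θ = exp (-(4 * cos (θ / 2) ^ 4)⁻¹) := by
  have : 0 < 4 * cos (θ / 2) ^ 4 := by positivity
  simp only [EE, expNegInvGlue, not_le.2 this, if_false]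

lemma EE_nonneg (θ : ℝ) : 0 ≤ EE θ := expNegInvGlue.nonneg _

lemma EE_bound (m : ℕ) {θ : ℝ} (h : cos (θ / 2) ≠ 0) :
    EE θ ≤ (m.factorial : ℝ) * (4 * cos (θ / 2) ^ 4) ^ m := by
  rw [EE_eq h, exp_neg]
  have hp : 0 < 4 * cos (θ / 2) ^ 4 := by positivity
  have h1 := Real.pow_div_factorial_le_exp (4 * cos (θ / 2) ^ 4)⁻¹ (by positivity) m
  have hm : (0 : ℝ) < m.factorial := by positivity
  calc _ ≤ ((4 * cos (θ / 2) ^ 4)⁻¹ ^ m / (m.factorial : ℝ))⁻¹ :=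
        inv_anti₀ (by positivity) h1
    _ = _ := by rw [inv_div, inv_pow, div_inv_eq_mul]

lemma HH_bound (n : ℕ) (a : ℝ → ℝ) (c : ℝ) (θ : ℝ) :
    |HH n a c θ| ≤ ((n + 2).factorial * 4 ^ (n + 2) : ℝ) * |a θ| * |cos (θ / 2)| ^ 2 := by
  by_cases h : cos (θ / 2) = 0
  · simp [HH, EE_zero h, h]
  unfold HH
  have hu : 0 < |cos (θ / 2)| := abs_pos.2 h
  have h1 : |cos (θ / 2)| ≤ 1 := abs_cos_le_one _
  have key : EE θ * |cos (θ / 2)|⁻¹ ^ n ≤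
      ((n + 2).factorial * 4 ^ (n + 2) : ℝ) * |cos (θ / 2)| ^ 2 := by
    have hb := EE_bound (n + 2) h
    have he : cos (θ / 2) ^ 4 = |cos (θ / 2)| ^ 4 := by
      rw [← abs_pow, abs_of_nonneg]; positivity
    rw [he, mul_pow, ← mul_assoc] at hb
    rw [inv_pow, ← div_eq_mul_inv, div_le_iff₀ (by positivity), mul_assoc, ← pow_add]
    refine hb.trans ?_
    gcongr ?_ * ?_
    rw [← pow_mul]
    exact pow_le_pow_of_le_one hu.le h1 (by omega)
  have hs : |sin (2 * tan (θ / 2) + c)| ≤ 1 := abs_sin_le_one _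
  rw [abs_mul, abs_mul, abs_mul, abs_pow, abs_inv, abs_of_nonneg (EE_nonneg θ), ← mul_assoc]
  calc _ ≤ (((n + 2).factorial * 4 ^ (n + 2) : ℝ) * |cos (θ / 2)| ^ 2) * (|a θ| * 1) := by
        gcongr
    _ = _ := by ring

lemma HH_deriv (n : ℕ) (a : ℝ → ℝ) (ha : ContDiff ℝ (⊤ : ℕ∞) a) (c θ : ℝ) :
    HasDerivAt (HH n a c)
      (HH (n + 5) (fun x => -(sin (x / 2) / 2) * a x) c θ
        + HH (n + 1) (fun x => n / 2 * sin (x / 2) * a x) c θ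
        + HH n (deriv a) c θ + HH (n + 2) a (c + π / 2) θ) θ := by
  by_cases h : cos (θ / 2) = 0
  · have h0 : ∀ n a c, HH n a c θ = 0 := fun n a c => by simp [HH, EE_zero h]
    simp only [h0, add_zero]
    have hO : HH n a c =O[nhds θ] fun x => ‖x - θ‖ ^ 2 := by
      have hca : ∀ᶠ x in nhds θ, |a x| < |a θ| + 1 :=
        (ha.continuous.abs.continuousAt (x := θ)).eventually_lt_const (by simp)
      refine Asymptotics.IsBigO.of_bound
        (((n + 2).factorial * 4 ^ (n + 2) : ℝ) * (|a θ| + 1)) ?_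
      filter_upwards [hca] with x hx
      have hl : |cos (x / 2)| ≤ ‖x - θ‖ := by
        have := Real.abs_cos_sub_cos_le (x / 2) (θ / 2)
        rw [h, sub_zero] at this
        refine this.trans ?_
        rw [Real.norm_eq_abs, ← sub_div, abs_div, abs_two]
        linarith [abs_nonneg (x - θ)]
      rw [Real.norm_eq_abs, norm_pow, norm_norm]
      refine (HH_bound n a c x).trans ?_
      gcongr
    have := hO.hasFDerivAt (𝕜 := ℝ) (by norm_num)
    simpa using this.hasDerivAt
  · have hd : HasDerivAt (fun x : ℝ => x / 2) (1 / 2) θ := (hasDerivAt_id θ).div_const 2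
    have hu : HasDerivAt (fun x : ℝ => cos (x / 2)) (-sin (θ / 2) * (1 / 2)) θ := hd.cos
    have hE := (((hu.pow 4).const_mul 4).inv (by simpa using h)).neg.exp
    have hn := (hu.inv h).pow n
    have ht := (((Real.hasDerivAt_tan h).comp θ hd).const_mul 2).add_const c |>.sin
    have haa : HasDerivAt a (deriv a θ) θ := (ha.differentiable (by simp) θ).hasDerivAt
    have := hE.mul (hn.mul (haa.mul ht))
    refine (this.congr_of_eventuallyEq ?_).congr_deriv ?_
    · have : ∀ᶠ x in nhds θ, cos (x / 2) ≠ 0 :=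
        (hu.continuousAt).eventually_ne h
      filter_upwards [this] with x hx
      simp [HH, EE_eq hx]
    · simp only [HH, EE_eq h, ← add_assoc, sin_add_pi_div_two]
      simp
      rcases n with _ | n
      · simp
        field_simp
        ring
      · simp
        field_simp
        ring

lemma HH_smooth (m : ℕ) : ∀ (n : ℕ) (a : ℝ → ℝ), ContDiff ℝ (⊤ : ℕ∞) a → ∀ c : ℝ,
    ContDiff ℝ m (HH n a c) := by
  induction m with
  | zero =>
    intro n a ha c
    exact contDiff_zero.2 (continuous_iff_continuousAt.2
      fun x => (HH_deriv n a ha c x).continuousAt)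
  | succ m ih =>
    intro n a ha c
    rw [show ((m + 1 : ℕ) : WithTop ℕ∞) = m + 1 from rfl]
    refine contDiff_succ_iff_deriv.2
      ⟨fun x => (HH_deriv n a ha c x).differentiableAt, by simp, ?_⟩
    rw [show deriv (HH n a c) = _ from funext fun x => (HH_deriv n a ha c x).deriv]
    have hda : ContDiff ℝ (⊤ : ℕ∞) (deriv a) := (contDiff_infty_iff_deriv.1 ha).2
    exact (((ih _ _ (by fun_prop) _).add (ih _ _ (by fun_prop) _)).add (ih _ _ hda _)).add
      (ih _ _ ha _)

lemma g_eq : g = fun θ => EE θ / 2 - HH 0 (fun _ => 1 / 2) (π / 2) θ := by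
  funext θ
  have hiff : (∃ k : ℤ, θ = π + 2 * π * k) ↔ cos (θ / 2) = 0 := by
    rw [cos_eq_zero_iff]
    refine exists_congr fun k => ⟨fun h => by rw [h]; ring, fun h => by linarith⟩
  unfold g
  by_cases h : cos (θ / 2) = 0
  · rw [if_pos (hiff.2 h)]
    simp [HH, EE_zero h]
  · rw [if_neg (mt hiff.1 h)]
    have h2 : 1 + cos θ = 2 * cos (θ / 2) ^ 2 := by
      rw [Real.cos_sq, mul_div_cancel₀ θ (by norm_num : (2 : ℝ) ≠ 0)]; ring
    simp only [HH, EE_eq h, sin_add_pi_div_two]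
    rw [h2, Real.sin_sq_eq_half_sub, one_div,
      show (2 * cos (θ / 2) ^ 2) ^ 2 = 4 * cos (θ / 2) ^ 4 by ring]
    ring

theorem stmt_3 : ContDiff ℝ (⊤ : ℕ∞) g := by
  rw [g_eq]
  have h : ContDiff ℝ (⊤ : ℕ∞) (HH 0 (fun _ => 1 / 2) (π / 2)) :=
    contDiff_all_iff_nat.2 (fun m => HH_smooth m _ _ contDiff_const _) _
  exact (EE_smooth.div_const 2).sub h
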